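/- The reduction of f_δ modulo 23, i.e., the image of f_δ under the coefficient map ℤ[X] → (ℤ/23ℤ)[X], equals 12 times a monic irreducible polynomial of degree 16 over ℤ/23ℤ; in particular f_δ mod 23 is irreducible in (ℤ/23ℤ)[X] up to a unit (corresponding to a 16-cycle in the Galois group). -/

import Mathlib

open Polynomial in
/-- The degree-16 integer polynomial `f_δ` whose root in [0.167, 0.169] is the
optimal value of δ. -/
noncomputable def fdelta : Polynomial ℤ :=
  589824 * X ^ 16 - 7077888 * X ^ 15 + 41189376 * X ^ 14 - 154386432 * X ^ 13 +
    416788480 * X ^ 12 - 857112576 * X ^ 11 + 1383417856 * X ^ 10 - 1779354624 * X ^ 9 +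
    1834437632 * X ^ 8 - 1514108928 * X ^ 7 + 992782336 * X ^ 6 - 509312064 * X ^ 5 +
    199354208 * X ^ 4 - 57160752 * X ^ 3 + 11200088 * X ^ 2 - 1313928 * X + 67417

open Polynomial

namespace FD

variable {R : Type*} [CommRing R]

/-- Value at `x` of the polynomial with the given coefficients (lowest first). -/
def ev (x : R) : List ℕ → R
  | [] => 0
  | c :: l => (c : R) + x * ev x l

/-- `a + t * b`, coefficients reduced modulo 23. -/
def axpy (t : ℕ) : List ℕ → List ℕ → List ℕ
  | a, [] => a
  | [], b :: bs => (t * b) % 23 :: axpy t [] bs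
  | a :: as, b :: bs => (a + t * b) % 23 :: axpy t as bs

/-- Coefficients of `X ^ 16` modulo the polynomial `gg`. -/
def ng : List ℕ := [15, 14, 7, 4, 11, 13, 5, 21, 4, 1, 3, 8, 11, 3, 3, 12]

/-- Multiplication by `X` modulo `gg`. -/
def mulX (l : List ℕ) : List ℕ :=
  match l.drop 15 with
  | [t] => axpy t (0 :: l.take 15) ng
  | _ => 0 :: l

/-- Multiplication modulo `gg`. -/
def mul : List ℕ → List ℕ → List ℕ
  | [], _ => []
  | c :: a, b => axpy c (mulX (mul a b)) b

/-- Powers by repeated squaring; the exponent is given by binary digits, lowest first. -/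
def pw (a : List ℕ) : List Bool → List ℕ
  | [] => [1]
  | false :: l => (fun r => mul r r) (pw a l)
  | true :: l => mul a ((fun r => mul r r) (pw a l))

/-- The number with given binary digits. -/
def num : List Bool → ℕ
  | [] => 0
  | false :: l => 2 * num l
  | true :: l => 2 * num l + 1

theorem cast_mod [CharP R 23] (n : ℕ) : ((n % 23 : ℕ) : R) = n := by
  conv_rhs => rw [← Nat.mod_add_div n 23]
  rw [Nat.cast_add, Nat.cast_mul, CharP.cast_eq_zero R 23]
  ring

theorem ev_axpy [CharP R 23] (x : R) (t : ℕ) (a b : List ℕ) :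
    ev x (axpy t a b) = ev x a + t * ev x b := by
  induction b generalizing a with
  | nil => cases a <;> simp [axpy, ev]
  | cons b bs ih =>
    cases a with
    | nil => simp only [axpy, ev, ih, cast_mod]; push_cast; ring
    | cons a as => simp only [axpy, ev, ih, cast_mod]; push_cast; ring

theorem ev_split (x : R) (n : ℕ) (l : List ℕ) :
    ev x l = ev x (l.take n) + x ^ n * ev x (l.drop n) := by
  induction n generalizing l with
  | zero => simp [ev]
  | succ n ih =>
    cases l with
    | nil => simp [ev]
    | cons c l => simp only [List.take_succ_cons, List.drop_succ_cons, ev]; rw [ih l]; ring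

theorem ev_mulX [CharP R 23] (x : R) (hx : x ^ 16 = ev x ng) (l : List ℕ) :
    ev x (mulX l) = x * ev x l := by
  unfold mulX
  split
  · next t h =>
    rw [ev_axpy, ← hx, ev_split x 15 l, h]
    simp only [ev]; push_cast; ring
  · simp [ev]

theorem ev_mul [CharP R 23] (x : R) (hx : x ^ 16 = ev x ng) (a b : List ℕ) :
    ev x (mul a b) = ev x a * ev x b := by
  induction a with
  | nil => simp [mul, ev]
  | cons c a ih => rw [mul, ev_axpy, ev_mulX x hx, ih, ev]; ring

theorem ev_pw [CharP R 23] (x : R) (hx : x ^ 16 = ev x ng) (a : List ℕ) (l : List Bool) :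
    ev x (pw a l) = ev x a ^ num l := by
  induction l with
  | nil => simp [pw, num, ev]
  | cons b l ih =>
    cases b
    · simp only [pw, num, ev_mul x hx, ih]; ring
    · simp only [pw, num, ev_mul x hx, ih]; ring

/-- Binary digits of `23 ^ 8`. -/
def bits : List Bool := [true, false, false, false, false, false, true, false, false, true, true, true, false, false, true, true, false, true, false, false, true, true, false, true, true, true, false, true, true, true, false, false, false, true, false, false, true]

/-- `X ^ (23 ^ 8)` modulo `gg`. -/
def A : List ℕ := [18, 15, 9, 20, 12, 8, 7, 9, 13, 14, 10, 0, 18, 8, 17, 19]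

/-- The inverse of `X ^ (23 ^ 8) - X` modulo `gg`. -/
def U : List ℕ := [22, 2, 2, 3, 6, 10, 22, 1, 0, 12, 10, 15, 20, 5, 5, 13]

theorem num_bits : num bits = 23 ^ 8 := by decide +kernel

theorem pw_X : pw [0, 1] bits = A := by decide +kernel

theorem pw_A : pw A bits = [0, 1] ++ List.replicate 14 0 := by decide +kernel

theorem mul_U : mul U (axpy 22 A [0, 1]) = 1 :: List.replicate 15 0 := by decide +kernel

/-- The monic associate of the reduction of `f_δ`. -/
noncomputable def gg : Polynomial (ZMod 23) :=
  X ^ 16 + (11 * X ^ 15 + 20 * X ^ 14 + 20 * X ^ 13 + 12 * X ^ 12 + 15 * X ^ 11 + 20 * X ^ 10 + 22 * X ^ 9 + 19 * X ^ 8 + 2 * X ^ 7 + 18 * X ^ 6 + 10 * X ^ 5 + 12 * X ^ 4 + 19 * X ^ 3 + 16 * X ^ 2 + 9 * X ^ 1 + 8)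

theorem gg_aux : (11 * X ^ 15 + 20 * X ^ 14 + 20 * X ^ 13 + 12 * X ^ 12 + 15 * X ^ 11 + 20 * X ^ 10 + 22 * X ^ 9 + 19 * X ^ 8 + 2 * X ^ 7 + 18 * X ^ 6 + 10 * X ^ 5 + 12 * X ^ 4 + 19 * X ^ 3 + 16 * X ^ 2 + 9 * X ^ 1 + 8 : Polynomial (ZMod 23)).degree < ((16 : ℕ) : WithBot ℕ) := by
  refine lt_of_le_of_lt (b := ((15 : ℕ) : WithBot ℕ)) ?_ (by norm_num)
  compute_degree
  exact le_rfl

theorem gg_monic : gg.Monic := monic_X_pow_add gg_aux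

theorem gg_natDegree : gg.natDegree = 16 := by
  have : Fact (Nat.Prime 23) := ⟨by norm_num⟩
  unfold gg
  exact natDegree_eq_of_degree_eq_some (by
    rw [degree_add_eq_left_of_degree_lt, degree_X_pow]
    · rw [degree_X_pow]; exact gg_aux)

theorem c23 : (23 : Polynomial (ZMod 23)) = 0 := by
  have := CharP.cast_eq_zero (Polynomial (ZMod 23)) 23
  exact_mod_cast this

theorem map_eq : fdelta.map (Int.castRingHom (ZMod 23)) = C 12 * gg := by
  have h : (C 12 : Polynomial (ZMod 23)) = 12 := rfl
  rw [h]
  simp only [fdelta, gg, Polynomial.map_add, Polynomial.map_sub, Polynomial.map_mul,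
    Polynomial.map_pow, Polynomial.map_X, Polynomial.map_ofNat]
  linear_combination ((25644) * X ^ 16 + (-307740) * X ^ 15 + (1790832) * X ^ 14 + (-6712464) * X ^ 13 + (18121232) * X ^ 12 + (-37265772) * X ^ 11 + (60148592) * X ^ 10 + (-77363256) * X ^ 9 + (79758148) * X ^ 8 + (-65830824) * X ^ 7 + (43164440) * X ^ 6 + (-22144008) * X ^ 5 + (8667568) * X ^ 4 + (-2485260) * X ^ 3 + (486952) * X ^ 2 + (-57132) * X ^ 1 + (2927) * X ^ 0) * c23

/-- Every irreducible factor of `gg` has degree at least 16. -/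
theorem factor_degree (h : Polynomial (ZMod 23)) (hi : Irreducible h) (hd : h ∣ gg) :
    16 ≤ h.natDegree := by
  have : Fact (Nat.Prime 23) := ⟨by norm_num⟩
  have : Fact (Irreducible h) := ⟨hi⟩
  have : CharP (AdjoinRoot h) 23 := charP_of_injective_algebraMap (algebraMap (ZMod 23) _).injective 23
  have h23 : (23 : AdjoinRoot h) = 0 := by
    have := CharP.cast_eq_zero (AdjoinRoot h) 23
    exact_mod_cast this
  set x : AdjoinRoot h := AdjoinRoot.root h with hxdef
  have hroot : aeval x gg = 0 := by
    obtain ⟨k, hk⟩ := hd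
    rw [hk, map_mul, hxdef, AdjoinRoot.aeval_eq, AdjoinRoot.mk_self, zero_mul]
  have hx : x ^ 16 = ev x ng := by
    simp only [gg, map_add, map_mul, map_pow, aeval_X, map_ofNat] at hroot
    simp only [ev, ng]
    push_cast
    linear_combination hroot - (x ^ 0 + x ^ 1 + x ^ 2 + x ^ 3 + x ^ 4 + x ^ 5 + x ^ 6 + x ^ 7 + x ^ 8 + x ^ 9 + x ^ 10 + x ^ 11 + x ^ 12 + x ^ 13 + x ^ 14 + x ^ 15) * h23
  have e1 : x ^ 23 ^ 8 = ev x A := by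
    rw [← pw_X, ev_pw x hx, num_bits]
    simp [ev]
  have e2 : (x ^ 23 ^ 8) ^ 23 ^ 8 = x := by
    have := ev_pw x hx A bits
    rw [pw_A, num_bits, ← e1] at this
    rw [← this]
    simp [ev, List.replicate]
  have e3 : ev x U * (x ^ 23 ^ 8 - x) = 1 := by
    have := ev_mul x hx U (axpy 22 A [0, 1])
    rw [mul_U, ev_axpy, ← e1] at this
    simp only [ev, List.replicate] at this
    push_cast at this
    linear_combination -this - ev x U * x * h23
  have hne : x ^ 23 ^ 8 ≠ x := by
    intro h0
    rw [h0, sub_self, mul_zero] at e3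
    exact zero_ne_one e3
  have hp (n : ℕ) : Function.IsPeriodicPt (frobenius (AdjoinRoot h) 23) n x ↔ x ^ 23 ^ n = x := by
    rw [Function.IsPeriodicPt, Function.IsFixedPt, iterate_frobenius]
  have p16 : Function.IsPeriodicPt (frobenius (AdjoinRoot h) 23) 16 x := by
    rw [hp]
    rw [← pow_mul, ← pow_add] at e2
    exact e2
  have pd : Function.IsPeriodicPt (frobenius (AdjoinRoot h) 23) h.natDegree x := by
    rw [hp]
    have pb := AdjoinRoot.powerBasis hi.ne_zero
    have : Module.Finite (ZMod 23) (AdjoinRoot h) := pb.finite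
    have : Finite (AdjoinRoot h) := Module.finite_of_finite (ZMod 23)
    have := Fintype.ofFinite (AdjoinRoot h)
    have hf : Module.finrank (ZMod 23) (AdjoinRoot h) = h.natDegree :=
      finrank_quotient_span_eq_natDegree
    have hc := Module.card_eq_pow_finrank (K := ZMod 23) (V := AdjoinRoot h)
    rw [hf, ZMod.card] at hc
    rw [← hc]
    exact FiniteField.pow_card x
  have hg := p16.gcd pd
  by_contra hlt
  have hpos : 0 < h.natDegree := hi.natDegree_pos
  have h8 : Nat.gcd 16 h.natDegree ∣ 8 := by
    generalize h.natDegree = d at *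
    have : d < 16 := by omega
    clear * - this hpos
    interval_cases d <;> decide
  exact hne ((hp 8).1 (hg.trans_dvd h8))

theorem gg_irreducible : Irreducible gg := by
  have : Fact (Nat.Prime 23) := ⟨by norm_num⟩
  have hnu : ¬ IsUnit gg := not_isUnit_of_natDegree_pos _ (by rw [gg_natDegree]; norm_num)
  obtain ⟨h, hi, hd⟩ := WfDvdMonoid.exists_irreducible_factor hnu gg_monic.ne_zero
  have h16 := factor_degree h hi hd
  have ha : Associated h gg :=
    associated_of_dvd_of_natDegree_le hd gg_monic.ne_zero (by rw [gg_natDegree]; exact h16)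
  exact ha.irreducible hi

end FD

open Polynomial in
/-- The reduction of `f_δ` modulo 23 equals 12 times a monic irreducible polynomial of
degree 16 over ℤ/23ℤ; in particular `f_δ mod 23` is irreducible up to a unit
(corresponding to a 16-cycle in the Galois group). -/
theorem fdelta_mod_23_irreducible :
    ∃ g : Polynomial (ZMod 23), g.Monic ∧ Irreducible g ∧ g.natDegree = 16 ∧
      fdelta.map (Int.castRingHom (ZMod 23)) = C 12 * g := by
  exact ⟨FD.gg, FD.gg_monic, FD.gg_irreducible, FD.gg_natDegree, FD.map_eq⟩
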